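/- Fix a positive integer k. For every n ≥ 3, χ_L(S_n(k)) ≥ χ_L(S_{n−1}(k)); that is, n ↦ χ_L(S_n(k)) is a weakly increasing function of n. -/

import Mathlib

open SimpleGraph

/-- Distance from a vertex to a set of vertices, `d(u,S) = min {d(u,v) : v ∈ S}`. -/
noncomputable def distToSet {V : Type*} (G : SimpleGraph V) (u : V) (S : Set V) : ℕ :=
  sInf (G.dist u '' S)

/-- `c` is a locating coloring of `G` with `k` colors: a proper coloring such that any two
distinct vertices are resolved by some color class. -/
def IsLocatingColoring {V : Type*} (G : SimpleGraph V) {k : ℕ} (c : V → Fin k) : Prop :=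
  (∀ u v : V, G.Adj u v → c u ≠ c v) ∧
  ∀ u v : V, u ≠ v →
    ∃ i : Fin k, distToSet G u (c ⁻¹' {i}) ≠ distToSet G v (c ⁻¹' {i})

/-- The locating chromatic number `χ_L(G)`: the least `k` admitting a locating `k`-coloring. -/
noncomputable def locatingChromaticNumber {V : Type*} (G : SimpleGraph V) : ℕ :=
  sInf {k : ℕ | ∃ c : V → Fin k, IsLocatingColoring G c}

/-- The vertex set of the palm `S_n(a_1, …, a_n)`: a hub `none` and, for each leg
`i : Fin n` (representing leg `i+1`), vertices `j : Fin (a (i+1))`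
(vertex `some ⟨i, j⟩` represents `a_{i+1, j+1}`). -/
def PalmVert (n : ℕ) (a : ℕ → ℕ) : Type :=
  Option ((i : Fin n) × Fin (a ((i : ℕ) + 1)))

/-- The palm `S_n(a_1, …, a_n)`: the star `K_{1,n}` whose `i`-th edge has been subdivided
`a_i - 1` times; the hub is joined to the first vertex of each leg, and consecutive
vertices along a leg are adjacent. -/
def Palm (n : ℕ) (a : ℕ → ℕ) : SimpleGraph (PalmVert n a) :=
  SimpleGraph.fromRel fun u v =>
    match u, v with
    | none, some ⟨_, j⟩ => (j : ℕ) = 0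
    | some ⟨i, j⟩, some ⟨i', j'⟩ => (i : ℕ) = (i' : ℕ) ∧ (j' : ℕ) = (j : ℕ) + 1
    | _, _ => False

/-!
Delete from the palm `S_{n+1}(a)` a leg `l` such that every vertex `w` has the color of some vertex
off `l` that is at most as high above the hub. Paths that leave `l` run through the hub, so no
vertex off `l` gets farther from any color class, and a locating coloring stays locating.
If there were no such `l`, then for each leg there would be a color all of whose lowest vertices lie
on that leg; these colors are distinct and none is that of the hub, so there would be more colors
than legs. Hence deletion is possible when there are at most `n + 1` colors. With at least `n + 2`
colors there is nothing to delete: every palm with `n` legs has a locating `(n + 2)`-coloring.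
-/

section Distance

variable {V W : Type*} {G : SimpleGraph V} {H : SimpleGraph W}

theorem exists_walk_length_eq_of_descent {δ : V → V → ℕ} (h_self : ∀ u, δ u u = 0)
    (h_descent : ∀ u v, u ≠ v → (∃ w, G.Adj w v ∧ δ u v = δ u w + 1) ∨
      ∃ w, G.Adj u w ∧ δ u v = δ w v + 1) (u v : V) :
    ∃ p : G.Walk u v, p.length = δ u v := by
  induction hd : δ u v generalizing u v with
  | zero =>
    obtain rfl : u = v := by
      by_contra huv
      rcases h_descent u v huv with ⟨w, -, hw⟩ | ⟨w, -, hw⟩ <;> omega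
    exact ⟨.nil, rfl⟩
  | succ d ih =>
    have huv : u ≠ v := by
      rintro rfl
      simp [h_self] at hd
    rcases h_descent u v huv with ⟨w, hadj, hw⟩ | ⟨w, hadj, hw⟩
    · obtain ⟨p, hp⟩ := ih u w (by omega)
      exact ⟨p.concat hadj, by rw [Walk.length_concat, hp]⟩
    · obtain ⟨p, hp⟩ := ih w v (by omega)
      exact ⟨p.cons hadj, by rw [Walk.length_cons, hp]⟩

theorem le_add_length_of_forall_adj {f : V → ℕ} (hf : ∀ v w, G.Adj v w → f w ≤ f v + 1)
    {v w : V} (p : G.Walk v w) : f w ≤ f v + p.length := by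
  induction p with
  | nil => simp
  | cons hadj p ih =>
    have h_first := hf _ _ hadj
    rw [Walk.length_cons]
    omega

theorem distToSet_singleton (u v : V) : distToSet G u {v} = G.dist u v := by
  rw [distToSet, Set.image_singleton, csInf_singleton]

theorem distToSet_eq_zero_iff (hG : G.Connected) {u : V} {S : Set V} (hS : S.Nonempty) :
    distToSet G u S = 0 ↔ u ∈ S := by
  simp [distToSet, hG.dist_eq_zero_iff, hS.ne_empty]

theorem distToSet_preimage {φ : V → W} (h_dist : ∀ u v, H.dist (φ u) (φ v) = G.dist u v) {u : V}
    {S : Set W} (h_near : ∀ w ∈ S, ∃ v, φ v ∈ S ∧ H.dist (φ u) (φ v) ≤ H.dist (φ u) w) :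
    distToSet G u (φ ⁻¹' S) = distToSet H (φ u) S := by
  apply csInf_eq_csInf_of_forall_exists_le
  · rintro _ ⟨v, hv, rfl⟩
    exact ⟨_, ⟨φ v, hv, rfl⟩, (h_dist u v).le⟩
  · rintro _ ⟨w, hw, rfl⟩
    obtain ⟨v, hv, hle⟩ := h_near w hw
    exact ⟨_, ⟨v, hv, rfl⟩, (h_dist u v).symm.trans_le hle⟩

end Distance

namespace IsLocatingColoring

variable {V W : Type*} {G : SimpleGraph V} {H : SimpleGraph W} {m : ℕ}

theorem of_connected (hG : G.Connected) {c : V → Fin m}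
    (h_proper : ∀ u v, G.Adj u v → c u ≠ c v)
    (h_resolve : ∀ u v, u ≠ v → c u = c v →
      ∃ i, distToSet G u (c ⁻¹' {i}) ≠ distToSet G v (c ⁻¹' {i})) :
    IsLocatingColoring G c := by
  refine ⟨h_proper, fun u v huv => ?_⟩
  by_cases hc : c u = c v
  · exact h_resolve u v huv hc
  · have h_nonempty : (c ⁻¹' {c u}).Nonempty := ⟨u, rfl⟩
    refine ⟨c u, fun h => hc ?_⟩
    rw [(distToSet_eq_zero_iff hG h_nonempty).2 rfl, eq_comm,
      distToSet_eq_zero_iff hG h_nonempty] at h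
    exact h.symm

theorem comp {c : W → Fin m} (hc : IsLocatingColoring H c) {φ : V → W}
    (h_inj : Function.Injective φ) (h_dist : ∀ u v, H.dist (φ u) (φ v) = G.dist u v)
    (h_near : ∀ u w, ∃ v, c (φ v) = c w ∧ H.dist (φ u) (φ v) ≤ H.dist (φ u) w) :
    IsLocatingColoring G (c ∘ φ) := by
  have h_distToSet (u : V) (i : Fin m) :
      distToSet G u ((c ∘ φ) ⁻¹' {i}) = distToSet H (φ u) (c ⁻¹' {i}) := by
    rw [Set.preimage_comp, distToSet_preimage h_dist]
    rintro w rfl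
    exact h_near u w
  refine ⟨fun u v hadj => hc.1 _ _ ?_, fun u v huv => ?_⟩
  · rwa [← dist_eq_one_iff_adj, h_dist, dist_eq_one_iff_adj]
  · obtain ⟨i, hi⟩ := hc.2 _ _ (h_inj.ne huv)
    exact ⟨i, by rwa [h_distToSet, h_distToSet]⟩

theorem locatingChromaticNumber_le {c : V → Fin m} (hc : IsLocatingColoring G c) :
    locatingChromaticNumber G ≤ m :=
  Nat.sInf_le ⟨c, hc⟩

theorem exists_minimal {c : V → Fin m} (hc : IsLocatingColoring G c) :
    ∃ c' : V → Fin (locatingChromaticNumber G), IsLocatingColoring G c' :=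
  Nat.sInf_mem (s := {k | ∃ c : V → Fin k, IsLocatingColoring G c}) ⟨m, c, hc⟩

end IsLocatingColoring

namespace PalmVert

variable {n : ℕ} {a : ℕ → ℕ}

/-- The leg containing a vertex, `none` for the hub; with `height`, the second coordinate, it
determines the vertex. -/
def leg : PalmVert n a → Option (Fin n)
  | none => none
  | some ⟨i, _⟩ => some i

/-- The number of edges between a vertex and the hub, so that the paper's `a_{i,j}` has
height `j`. -/
def height : PalmVert n a → ℕ
  | none => 0
  | some ⟨_, j⟩ => j + 1

theorem height_eq_zero_iff {v : PalmVert n a} : v.height = 0 ↔ v.leg = none := by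
  rcases v with _ | ⟨i, j⟩ <;> simp [height, leg]

theorem eq_of_leg_eq_of_height_eq {u v : PalmVert n a} (h_leg : u.leg = v.leg)
    (h_height : u.height = v.height) : u = v := by
  rcases u with _ | ⟨i, j⟩ <;> rcases v with _ | ⟨i', j'⟩
  · rfl
  · simp [leg] at h_leg
  · simp [leg] at h_leg
  · obtain rfl : i = i' := by simpa [leg] using h_leg
    obtain rfl : j = j' := by simpa [height, Fin.ext_iff] using h_height
    rfl

/-- The hub `a_0` of a palm. -/
def hub : PalmVert n a :=
  none

theorem leg_hub : (hub : PalmVert n a).leg = none :=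
  rfl

theorem height_hub : (hub : PalmVert n a).height = 0 :=
  rfl

theorem exists_leg_eq_height_eq {v : PalmVert n a} {h : ℕ} (h_pos : 0 < h) (hv : h ≤ v.height) :
    ∃ w : PalmVert n a, w.leg = v.leg ∧ w.height = h := by
  rcases v with _ | ⟨i, j⟩ <;> simp only [height] at hv
  · omega
  · exact ⟨some ⟨i, ⟨h - 1, by omega⟩⟩, rfl, by simp only [height]; omega⟩

theorem exists_parent {v : PalmVert n a} (hv : v.height ≠ 0) :
    ∃ w : PalmVert n a, (w.leg = v.leg ∨ w.leg = none) ∧ v.height = w.height + 1 := by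
  by_cases h : v.height = 1
  · exact ⟨hub, .inr leg_hub, by rw [h, height_hub]⟩
  · obtain ⟨w, hleg, hw⟩ :=
      exists_leg_eq_height_eq (v := v) (h := v.height - 1) (by omega) (by omega)
    exact ⟨w, .inl hleg, by omega⟩

theorem adj_iff {u v : PalmVert n a} :
    (Palm n a).Adj u v ↔ (u.leg = v.leg ∨ u.leg = none ∨ v.leg = none) ∧
      (u.height = v.height + 1 ∨ v.height = u.height + 1) := by
  rw [Palm, SimpleGraph.fromRel_adj]
  rcases u with _ | ⟨i, j⟩ <;> rcases v with _ | ⟨i', j'⟩ <;> simp only [leg, height] <;> grind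

/-- The length of the path between two vertices: within a leg it is the difference of the heights,
between different legs the path runs through the hub. -/
def pathLength (u v : PalmVert n a) : ℕ :=
  if u.leg = v.leg then (u.height - v.height) + (v.height - u.height) else u.height + v.height

theorem pathLength_self (u : PalmVert n a) : pathLength u u = 0 := by
  simp [pathLength]

theorem pathLength_comm (u v : PalmVert n a) : pathLength u v = pathLength v u := by
  grind [pathLength]

theorem pathLength_le_of_adj (u : PalmVert n a) {v w : PalmVert n a} (h : (Palm n a).Adj v w) :
    pathLength u w ≤ pathLength u v + 1 := by
  rw [adj_iff] at h
  grind [pathLength, height_eq_zero_iff]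

theorem exists_adj_pathLength_eq {u v : PalmVert n a} (huv : u ≠ v) (h : u.height ≤ v.height) :
    ∃ w, (Palm n a).Adj w v ∧ pathLength u v = pathLength u w + 1 := by
  have hv : v.height ≠ 0 := fun hv => huv <| eq_of_leg_eq_of_height_eq
    (by grind [height_eq_zero_iff]) (by omega)
  obtain ⟨w, hleg, hheight⟩ := exists_parent hv
  refine ⟨w, adj_iff.2 (by tauto), ?_⟩
  -- As `u` is not above `v`, the path from `u` reaches `v` through the parent `w` of `v`.
  grind [pathLength, height_eq_zero_iff, eq_of_leg_eq_of_height_eq]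

section Map

variable {p : ℕ} {b : ℕ → ℕ}

/-- The map between palms that sends each leg `i` onto the leg `e i` of the same length. -/
def map (e : Fin p → Fin n) (h_len : ∀ i : Fin p, b (i + 1) = a (e i + 1)) :
    PalmVert p b → PalmVert n a
  | none => none
  | some ⟨i, j⟩ => some ⟨e i, j.cast (h_len i)⟩

variable (e : Fin p → Fin n) (h_len : ∀ i : Fin p, b (i + 1) = a (e i + 1))

theorem leg_map (v : PalmVert p b) : (v.map e h_len).leg = v.leg.map e := by
  rcases v with _ | ⟨i, j⟩ <;> rfl

theorem height_map (v : PalmVert p b) : (v.map e h_len).height = v.height := by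
  rcases v with _ | ⟨i, j⟩ <;> rfl

theorem mem_range_map {v : PalmVert n a} :
    v ∈ Set.range (map e h_len) ↔ v.leg ∈ Set.range (Option.map e) := by
  constructor
  · rintro ⟨u, rfl⟩
    exact ⟨u.leg, (leg_map e h_len u).symm⟩
  · rintro ⟨_ | i', hi'⟩ <;> rcases v with _ | ⟨i, j⟩ <;> simp only [leg, Option.map] at hi'
    · exact ⟨none, rfl⟩
    · cases hi'
    · cases hi'
    · obtain rfl := Option.some_injective _ hi'
      exact ⟨some ⟨i', j.cast (h_len i').symm⟩, rfl⟩

variable {e}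

theorem map_injective (he : Function.Injective e) :
    Function.Injective (map e h_len) := fun u v huv =>
  eq_of_leg_eq_of_height_eq
    (Option.map_injective he (by rw [← leg_map e h_len, huv, leg_map]))
    (by rw [← height_map e h_len, huv, height_map])

end Map

end PalmVert

section Palm

open PalmVert

variable {n : ℕ} {a : ℕ → ℕ}

theorem palm_exists_walk_length_eq (u v : PalmVert n a) :
    ∃ p : (Palm n a).Walk u v, p.length = pathLength u v := by
  refine exists_walk_length_eq_of_descent pathLength_self (fun u v huv => ?_) u v
  rcases le_total u.height v.height with h | h
  · exact .inl (exists_adj_pathLength_eq huv h)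
  · obtain ⟨w, hadj, hw⟩ := exists_adj_pathLength_eq huv.symm h
    exact .inr ⟨w, hadj.symm, by rwa [pathLength_comm u, pathLength_comm w]⟩

theorem palm_connected : (Palm n a).Connected where
  preconnected u v := (palm_exists_walk_length_eq u v).choose.reachable
  nonempty := ⟨hub⟩

theorem palm_dist (u v : PalmVert n a) : (Palm n a).dist u v = pathLength u v := by
  refine le_antisymm ?_ ?_
  · obtain ⟨p, hp⟩ := palm_exists_walk_length_eq u v
    exact hp ▸ dist_le p
  · obtain ⟨p, hp⟩ := palm_connected.exists_walk_length_eq_dist u v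
    simpa [pathLength_self, hp] using
      le_add_length_of_forall_adj (fun v w => pathLength_le_of_adj u (v := v) (w := w)) p

theorem palm_dist_le_height_add_height (u v : PalmVert n a) :
    (Palm n a).dist u v ≤ u.height + v.height := by
  grind [palm_dist, pathLength]

theorem palm_dist_of_leg_ne {u v : PalmVert n a} (h : u.leg ≠ v.leg) :
    (Palm n a).dist u v = u.height + v.height := by
  rw [palm_dist, pathLength, if_neg h]

end Palm

section Coloring

open PalmVert

variable {n : ℕ} {a : ℕ → ℕ}

/-- A locating coloring of a palm with two colors more than there are legs: the lowest vertex of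
each leg gets a private color, the other vertices alternate between `0` and `1`. The hub has color
`1` because, in a palm with one leg, no private color resolves it from the vertex of height `2`,
which has color `0`. -/
def palmColoring (v : PalmVert n a) : Fin (n + 2) :=
  match v.leg with
  | none => 1
  | some i => if v.height = 1 then i.addNat 2 else ⟨v.height % 2, by omega⟩

theorem val_palmColoring_of_leg_eq_none {v : PalmVert n a} (hv : v.leg = none) :
    (palmColoring v : ℕ) = 1 := by
  simp [palmColoring, hv]

theorem val_palmColoring_of_leg_eq_some {v : PalmVert n a} {i : Fin n} (hv : v.leg = some i) :
    (palmColoring v : ℕ) = if v.height = 1 then (i : ℕ) + 2 else v.height % 2 := by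
  simp only [palmColoring, hv]
  split <;> rfl

theorem palmColoring_ne_of_adj {u v : PalmVert n a} (hadj : (Palm n a).Adj u v) :
    palmColoring u ≠ palmColoring v := by
  rw [adj_iff] at hadj
  rw [ne_eq, Fin.ext_iff]
  rcases hu : u.leg with _ | i <;> rcases hv : v.leg with _ | i' <;>
    grind [val_palmColoring_of_leg_eq_none, val_palmColoring_of_leg_eq_some,
      height_eq_zero_iff]

theorem palmColoring_eq_addNat_iff {v : PalmVert n a} {i : Fin n} :
    palmColoring v = i.addNat 2 ↔ v.leg = some i ∧ v.height = 1 := by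
  rw [Fin.ext_iff, Fin.val_addNat]
  rcases hv : v.leg with _ | i' <;>
    grind [val_palmColoring_of_leg_eq_none, val_palmColoring_of_leg_eq_some]

theorem distToSet_palmColoring (u : PalmVert n a) {v : PalmVert n a} {i : Fin n}
    (hv : v.leg = some i) :
    distToSet (Palm n a) u (palmColoring ⁻¹' {i.addNat 2}) =
      if u.leg = some i then u.height - 1 else u.height + 1 := by
  have hv_pos : 0 < v.height := by grind [height_eq_zero_iff]
  obtain ⟨w, hw_leg, hw_height⟩ := exists_leg_eq_height_eq one_pos hv_pos
  have h_class : palmColoring ⁻¹' {i.addNat 2} = {w} := by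
    ext x
    rw [Set.mem_preimage, Set.mem_singleton_iff, Set.mem_singleton_iff, palmColoring_eq_addNat_iff]
    grind [eq_of_leg_eq_of_height_eq]
  rw [h_class, distToSet_singleton, palm_dist]
  grind [pathLength, height_eq_zero_iff]

theorem height_eq_height_add_two_of_distToSet_palmColoring_eq {u v : PalmVert n a} {i : Fin n}
    (hu : u.leg = some i) (hv : v.leg ≠ some i)
    (h_dist : distToSet (Palm n a) u (palmColoring ⁻¹' {i.addNat 2}) =
      distToSet (Palm n a) v (palmColoring ⁻¹' {i.addNat 2})) :
    u.height = v.height + 2 := by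
  rw [distToSet_palmColoring u hu, distToSet_palmColoring v hu, if_pos hu, if_neg hv] at h_dist
  omega

theorem palmColoring_ne_of_leg_eq_none_of_height_eq_two {u v : PalmVert n a} (hu : u.leg = none)
    (hv : v.height = 2) : palmColoring u ≠ palmColoring v := by
  obtain ⟨i, hi⟩ : ∃ i, v.leg = some i := by
    rw [← Option.ne_none_iff_exists', ne_eq, ← height_eq_zero_iff]
    omega
  simp [Fin.ext_iff, val_palmColoring_of_leg_eq_none hu, val_palmColoring_of_leg_eq_some hi, hv]

variable (n a) in
theorem isLocatingColoring_palmColoring :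
    IsLocatingColoring (Palm n a) (palmColoring : PalmVert n a → Fin (n + 2)) := by
  refine .of_connected palm_connected (fun u v => palmColoring_ne_of_adj) fun u v huv h_color => ?_
  by_contra! h_dist
  have h_gap (i : Fin n) (hu : u.leg = some i) (hv : v.leg ≠ some i) : u.height = v.height + 2 :=
    height_eq_height_add_two_of_distToSet_palmColoring_eq hu hv (h_dist _)
  have h_gap' (i : Fin n) (hv : v.leg = some i) (hu : u.leg ≠ some i) : v.height = u.height + 2 :=
    height_eq_height_add_two_of_distToSet_palmColoring_eq hv hu (h_dist _).symm
  rcases hu : u.leg with _ | i <;> rcases hv : v.leg with _ | i'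
  · exact huv <| eq_of_leg_eq_of_height_eq (hu.trans hv.symm) <|
      (height_eq_zero_iff.2 hu).trans (height_eq_zero_iff.2 hv).symm
  · refine palmColoring_ne_of_leg_eq_none_of_height_eq_two hu ?_ h_color
    rw [h_gap' i' hv (by simp [hu]), height_eq_zero_iff.2 hu]
  · refine palmColoring_ne_of_leg_eq_none_of_height_eq_two hv ?_ h_color.symm
    rw [h_gap i hu (by simp [hv]), height_eq_zero_iff.2 hv]
  · obtain rfl | hne := eq_or_ne i i'
    · have h_height := h_dist (i.addNat 2)
      rw [distToSet_palmColoring u hu, distToSet_palmColoring v hu, if_pos hu, if_pos hv]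
        at h_height
      refine huv <| eq_of_leg_eq_of_height_eq (hu.trans hv.symm) ?_
      grind [height_eq_zero_iff]
    · have h_u_above := h_gap i hu (by simpa [hv] using hne.symm)
      have h_v_above := h_gap' i' hv (by simpa [hu] using hne)
      omega

end Coloring

section Deletion

open PalmVert

variable {n p : ℕ} {a b : ℕ → ℕ}

theorem exists_leg_forall_exists_height_le {κ : Type*} [Fintype κ] (hκ : Fintype.card κ ≤ n)
    (c : PalmVert n a → κ) :
    ∃ l : Fin n, ∀ w, ∃ v, c v = c w ∧ v.height ≤ w.height ∧ v.leg ≠ some l := by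
  by_contra! h_legs
  have h_private (o : Option (Fin n)) :
      ∃ w : PalmVert n a, ∀ v, c v = c w → v.height ≤ w.height → v.leg = o := by
    rcases o with _ | l
    · exact ⟨hub, fun v _ hv => height_eq_zero_iff.1 (Nat.le_zero.1 hv)⟩
    · exact h_legs l
  choose w hw using h_private
  have h_inj : Function.Injective (c ∘ w) := fun o o' h => by
    rcases le_total (w o).height (w o').height with hle | hle
    · exact (hw o _ rfl le_rfl).symm.trans (hw o' _ h hle)
    · exact (hw o _ h.symm hle).symm.trans (hw o' _ rfl le_rfl)
  have h_card := Fintype.card_le_of_injective _ h_inj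
  rw [Fintype.card_option, Fintype.card_fin] at h_card
  omega

variable {e : Fin p → Fin n} (h_len : ∀ i : Fin p, b (i + 1) = a (e i + 1))

theorem palm_dist_map (he : Function.Injective e) (u v : PalmVert p b) :
    (Palm n a).dist (u.map e h_len) (v.map e h_len) = (Palm p b).dist u v := by
  simp only [palm_dist, pathLength, leg_map, height_map, (Option.map_injective he).eq_iff]

theorem IsLocatingColoring.comp_map {m : ℕ} {c : PalmVert n a → Fin m}
    (hc : IsLocatingColoring (Palm n a) c) (he : Function.Injective e)
    (h_low : ∀ w, ∃ v, c v = c w ∧ v.height ≤ w.height ∧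
      v ∈ Set.range (PalmVert.map e h_len)) :
    IsLocatingColoring (Palm p b) (c ∘ PalmVert.map e h_len) := by
  refine hc.comp (map_injective h_len he) (palm_dist_map h_len he) fun u w => ?_
  by_cases hw : w ∈ Set.range (PalmVert.map e h_len)
  · obtain ⟨w, rfl⟩ := hw
    exact ⟨w, rfl, le_rfl⟩
  · obtain ⟨_, h_color, h_height, v, rfl⟩ := h_low w
    have h_leg : (u.map e h_len).leg ≠ w.leg := fun h =>
      hw <| (mem_range_map e h_len).2 ⟨u.leg, (leg_map e h_len u).symm.trans h⟩
    refine ⟨v, h_color, ?_⟩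
    calc (Palm n a).dist (u.map e h_len) (v.map e h_len)
        ≤ (u.map e h_len).height + (v.map e h_len).height := palm_dist_le_height_add_height _ _
      _ ≤ (u.map e h_len).height + w.height := by gcongr
      _ = (Palm n a).dist (u.map e h_len) w := (palm_dist_of_leg_ne h_leg).symm

/-- The leg lengths `a` with those of leg `l` omitted. The legs of a palm are numbered from `0`,
whereas their lengths are numbered from `1`, so the omitted term is `a (l + 1)`. -/
def eraseLeg (a : ℕ → ℕ) (l j : ℕ) : ℕ :=
  a (if j ≤ l then j else j + 1)

theorem eraseLeg_eq_succAbove (a : ℕ → ℕ) (l : Fin (n + 1)) (i : Fin n) :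
    eraseLeg a l (i + 1) = a (l.succAbove i + 1) := by
  grind [eraseLeg, Fin.succAbove, Fin.lt_def]

theorem IsLocatingColoring.exists_eraseLeg {m : ℕ} (hm : m ≤ n + 1)
    {c : PalmVert (n + 1) a → Fin m} (hc : IsLocatingColoring (Palm (n + 1) a) c) :
    ∃ (l : Fin (n + 1)) (c' : PalmVert n (eraseLeg a l) → Fin m),
      IsLocatingColoring (Palm n (eraseLeg a l)) c' := by
  obtain ⟨l, hl⟩ := exists_leg_forall_exists_height_le (by simpa using hm) c
  refine ⟨l, _, hc.comp_map (eraseLeg_eq_succAbove a l) l.succAbove_right_injective fun w => ?_⟩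
  obtain ⟨v, h_color, h_height, hv⟩ := hl w
  refine ⟨v, h_color, h_height, (mem_range_map _ _).2 ?_⟩
  rcases h_leg : v.leg with _ | i
  · exact ⟨none, rfl⟩
  · obtain ⟨i', rfl⟩ := Fin.exists_succAbove_eq (x := i) (y := l) (by rintro rfl; exact hv h_leg)
    exact ⟨some i', rfl⟩

end Deletion

theorem locatingChromaticNumber_palm_le (n : ℕ) (a : ℕ → ℕ) :
    locatingChromaticNumber (Palm n a) ≤ n + 2 :=
  (isLocatingColoring_palmColoring n a).locatingChromaticNumber_le

theorem locatingChromaticNumber_regularPalm_mono_general (n : ℕ) (a : ℕ → ℕ) :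
    ∃ l : Fin (n + 1), locatingChromaticNumber (Palm n (eraseLeg a l)) ≤
      locatingChromaticNumber (Palm (n + 1) a) := by
  rcases le_or_gt (locatingChromaticNumber (Palm (n + 1) a)) (n + 1) with h_few | h_many
  · obtain ⟨c, hc⟩ := (isLocatingColoring_palmColoring (n + 1) a).exists_minimal
    obtain ⟨l, c', hc'⟩ := hc.exists_eraseLeg h_few
    exact ⟨l, hc'.locatingChromaticNumber_le⟩
  · exact ⟨0, (locatingChromaticNumber_palm_le n _).trans h_many⟩

/-- For a fixed positive integer `k`, the function `n ↦ χ_L(S_n(k))` is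
weakly increasing: for every `n ≥ 3`, `χ_L(S_{n-1}(k)) ≤ χ_L(S_n(k))`. -/
theorem locatingChromaticNumber_regularPalm_mono (k : ℕ) (hk : 1 ≤ k)
    (n : ℕ) (hn : 3 ≤ n) :
    locatingChromaticNumber (Palm (n - 1) (fun _ => k)) ≤
      locatingChromaticNumber (Palm n (fun _ => k)) := by
  obtain ⟨n, rfl⟩ := Nat.exists_eq_add_one_of_ne_zero (by omega : n ≠ 0)
  obtain ⟨_, h⟩ := locatingChromaticNumber_regularPalm_mono_general n (fun _ => k)
  exact h
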